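/- For every n ≥ 1, let X = {u₁, v₁, …, uₙ, vₙ} (2n distinct elements), let Σ = {{uᵢ} → vᵢ : i ∈ {1,…,n}}, let B⁺ = {X \ {uᵢ, vᵢ} : i ∈ {1,…,n}}, and let H = {X \ B : B ∈ B⁺} = {{uᵢ, vᵢ} : i ∈ {1,…,n}} be the complementary hypergraph. Then: (i) B⁺ is an antichain of closed sets of Σ; (ii) the dual antichain of B⁺ in the lattice of closed sets of Σ is B⁻ = {{v₁, …, vₙ}}, i.e., {v₁,…,vₙ} is the unique inclusion-minimal closed set not contained in any member of B⁺; and (iii) Tr(H) = {{z₁,…,zₙ} : zᵢ ∈ {uᵢ, vᵢ} for each i}, so |Tr(H)| = 2ⁿ while |B⁻| = 1. -/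

import Mathlib

/-- `T` is a transversal of the hypergraph `H`. -/
def IsTransversal {α : Type*} (H : Set (Set α)) (T : Set α) : Prop :=
  ∀ E ∈ H, (T ∩ E).Nonempty

/-- `T` is an inclusion-minimal transversal of `H`. -/
def IsMinTransversal {α : Type*} (H : Set (Set α)) (T : Set α) : Prop :=
  IsTransversal H T ∧ ∀ T' : Set α, IsTransversal H T' → T' ⊆ T → T' = T

/-- The ground set `X = {u₁, v₁, …, uₙ, vₙ}`, where `uᵢ = (i, false)` and
`vᵢ = (i, true)`. -/
abbrev ExV (n : ℕ) := Fin n × Bool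

/-- `C` is closed w.r.t. the implicational base `Σ = {{uᵢ} → vᵢ : i}`. -/
def ExClosed {n : ℕ} (C : Set (ExV n)) : Prop :=
  ∀ i : Fin n, (i, false) ∈ C → (i, true) ∈ C

/-- The antichain `B⁺ = {X \ {uᵢ, vᵢ} : i}`. -/
def ExBp (n : ℕ) : Set (Set (ExV n)) :=
  Set.range fun i : Fin n => ({(i, false), (i, true)} : Set (ExV n))ᶜ

/-- The hypergraph `H = {{uᵢ, vᵢ} : i}`. -/
def ExH (n : ℕ) : Set (Set (ExV n)) :=
  Set.range fun i : Fin n => ({(i, false), (i, true)} : Set (ExV n))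

/-- The set `{v₁, …, vₙ}`. -/
def ExVs (n : ℕ) : Set (ExV n) := Set.range fun i : Fin n => ((i, true) : ExV n)

/-! A transversal of pairwise disjoint edges is minimal exactly when it consists of one point from
each edge, so `n` disjoint pairs have `2 ^ n` minimal transversals. A set lies in no member of `B⁺`
iff it is a transversal of the complementary hypergraph `H`. If such a set is closed it contains
every `vᵢ`, since it contains `uᵢ` or `vᵢ` and `uᵢ` forces `vᵢ`; and the `vᵢ` alone already form a
closed transversal, which is therefore the least one. -/

open Function Set

section Transversals

variable {ι α : Type*} {H : Set (Set α)} {E : ι → Set α} {T : Set α}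

theorem isTransversal_range_iff : IsTransversal (range E) T ↔ ∀ i, (T ∩ E i).Nonempty :=
  forall_mem_range

theorem compl_image_range_compl (E : ι → Set α) : compl '' range (fun i => (E i)ᶜ) = range E := by
  simp only [← range_comp, comp_def, compl_compl]

theorem isTransversal_image_compl_iff :
    IsTransversal (compl '' H) T ↔ ∀ B ∈ H, ¬ T ⊆ B := by
  simp only [IsTransversal, forall_mem_image, inter_compl_nonempty_iff]

theorem isTransversal_range_of_mem {f : ι → α} (hf : ∀ i, f i ∈ E i) :
    IsTransversal (range E) (range f) :=
  isTransversal_range_iff.2 fun i => ⟨f i, mem_range_self i, hf i⟩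

theorem IsTransversal.exists_range_subset (hT : IsTransversal (range E) T) :
    ∃ f : ι → α, (∀ i, f i ∈ E i) ∧ range f ⊆ T := by
  choose f hfT hfE using isTransversal_range_iff.1 hT
  exact ⟨f, hfE, range_subset_iff.2 hfT⟩

theorem eq_of_mem_of_mem_of_pairwise_disjoint (hE : Pairwise (Disjoint on E)) {i j : ι} {x : α}
    (hi : x ∈ E i) (hj : x ∈ E j) : i = j :=
  hE.eq (not_disjoint_iff.2 ⟨x, hi, hj⟩)

theorem eq_range_of_isTransversal_of_subset (hE : Pairwise (Disjoint on E)) {f : ι → α}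
    (hf : ∀ i, f i ∈ E i) (hT : IsTransversal (range E) T) (hTf : T ⊆ range f) : T = range f := by
  refine hTf.antisymm (range_subset_iff.2 fun i => ?_)
  obtain ⟨x, hxT, hxE⟩ := isTransversal_range_iff.1 hT i
  obtain ⟨j, rfl⟩ := hTf hxT
  obtain rfl := eq_of_mem_of_mem_of_pairwise_disjoint hE (hf j) hxE
  exact hxT

theorem setOfPred_isMinTransversal_range (hE : Pairwise (Disjoint on E)) :
    {T | IsMinTransversal (range E) T} = range '' univ.pi E := by
  ext T
  constructor
  · rintro ⟨hT, hmin⟩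
    obtain ⟨f, hf, hfT⟩ := hT.exists_range_subset
    exact ⟨f, fun i _ => hf i, hmin _ (isTransversal_range_of_mem hf) hfT⟩
  · rintro ⟨f, hf, rfl⟩
    rw [mem_univ_pi] at hf
    exact ⟨isTransversal_range_of_mem hf, fun _ => eq_range_of_isTransversal_of_subset hE hf⟩

theorem isAntichain_range_of_pairwise_disjoint (hE : Pairwise (Disjoint on E))
    (hne : ∀ i, (E i).Nonempty) : IsAntichain (· ⊆ ·) (range E) := by
  rintro _ ⟨i, rfl⟩ _ ⟨j, rfl⟩ hij hsub
  obtain ⟨x, hx⟩ := hne i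
  exact hij (congrArg E (eq_of_mem_of_mem_of_pairwise_disjoint hE hx (hsub hx)))

end Transversals

section LabelledPoints

variable {ι β α : Type*} {w : ι → β → α}

theorem pairwise_disjoint_range_of_injective_uncurry (hw : Injective (uncurry w)) :
    Pairwise (Disjoint on fun i => range (w i)) := fun i j hij =>
  disjoint_range_iff.2 fun b c h => hij (congrArg Prod.fst (@hw (i, b) (j, c) h))

theorem injective_range_choice (hw : Injective (uncurry w)) :
    Injective fun f : ι → β => range fun i => w i (f i) := by
  intro f g (hfg : range (fun i => w i (f i)) = range fun i => w i (g i))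
  funext i
  obtain ⟨j, hj⟩ : w i (f i) ∈ range fun i => w i (g i) := hfg ▸ mem_range_self i
  obtain ⟨rfl, hgf⟩ := Prod.mk.inj (@hw (j, g j) (i, f i) hj)
  exact hgf.symm

theorem setOfPred_isMinTransversal_range_range (hw : Injective (uncurry w)) :
    {T | IsMinTransversal (range fun i => range (w i)) T} =
      range fun f : ι → β => range fun i => w i (f i) := by
  rw [setOfPred_isMinTransversal_range (pairwise_disjoint_range_of_injective_uncurry hw),
    ← range_piMap, ← range_comp]
  rfl

theorem ncard_setOfPred_isMinTransversal_range_range [Finite ι] (hw : Injective (uncurry w)) :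
    {T | IsMinTransversal (range fun i => range (w i)) T}.ncard = Nat.card β ^ Nat.card ι := by
  rw [setOfPred_isMinTransversal_range_range hw,
    ncard_range_of_injective (injective_range_choice hw), Nat.card_fun]

end LabelledPoints

section PairImplications

variable {ι α : Type*} (u v : ι → α)

theorem isLeast_closed_transversal_pairs :
    IsLeast {C : Set α | (∀ i, u i ∈ C → v i ∈ C) ∧ IsTransversal (range fun i => {u i, v i}) C}
      (range v) := by
  refine ⟨⟨fun i _ => mem_range_self i, isTransversal_range_of_mem fun i => Or.inr rfl⟩, ?_⟩
  rintro C ⟨hclosed, htrans⟩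
  refine range_subset_iff.2 fun i => ?_
  obtain ⟨x, hxC, rfl | rfl⟩ := isTransversal_range_iff.1 htrans i
  exacts [hclosed i hxC, hxC]

theorem setOfPred_minimal_closed_not_subset_compl_pair :
    {C : Set α | (∀ i, u i ∈ C → v i ∈ C) ∧
        (∀ B ∈ range fun i => ({u i, v i} : Set α)ᶜ, ¬ C ⊆ B) ∧
        ∀ C' : Set α, (∀ i, u i ∈ C' → v i ∈ C') →
          (∀ B ∈ range fun i => ({u i, v i} : Set α)ᶜ, ¬ C' ⊆ B) → C' ⊆ C → C' = C} =
      {range v} := by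
  ext C
  rw [mem_singleton_iff, ← (isLeast_closed_transversal_pairs u v).minimal_iff, minimal_subset_iff]
  simp only [← isTransversal_image_compl_iff, compl_image_range_compl, mem_ofPred_eq, and_assoc,
    and_imp, eq_comm]

variable {u v}

theorem mem_compl_pair_of_pairwise_disjoint
    (hE : Pairwise (Disjoint on fun i => ({u i, v i} : Set α))) {i j : ι}
    (hu : u i ∈ ({u j, v j} : Set α)ᶜ) : v i ∈ ({u j, v j} : Set α)ᶜ := by
  intro hv
  obtain rfl : i = j := eq_of_mem_of_mem_of_pairwise_disjoint hE (Or.inr rfl) hv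
  exact hu (Or.inl rfl)

end PairImplications

/-- The points `uᵢ` and `vᵢ` are `w i false` and `w i true`; `hw` says that they are all
distinct. The ground set `α` may have further points. -/
theorem stmt_15_general {ι α : Type*} [Finite ι] {w : ι → Bool → α}
    (hw : Injective (uncurry w)) :
    let Bp : Set (Set α) := range fun i => {w i false, w i true}ᶜ
    let H : Set (Set α) := range fun i => {w i false, w i true}
    let Closed : Set α → Prop := fun C => ∀ i, w i false ∈ C → w i true ∈ C
    let V : Set α := range fun i => w i true
    (compl '' Bp = H) ∧
    (IsAntichain (· ⊆ ·) Bp ∧ ∀ B ∈ Bp, Closed B) ∧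
    ({C | Closed C ∧ (∀ B ∈ Bp, ¬ C ⊆ B) ∧
        ∀ C', Closed C' → (∀ B ∈ Bp, ¬ C' ⊆ B) → C' ⊆ C → C' = C} = {V}) ∧
    ({T | IsMinTransversal H T} = range fun f : ι → Bool => range fun i => w i (f i)) ∧
    {T | IsMinTransversal H T}.ncard = 2 ^ Nat.card ι ∧
    ({V} : Set (Set α)).ncard = 1 := by
  intro Bp H Closed V
  have hH : H = range fun i => range (w i) := by simp only [H, Bool.range_eq]
  have hdisj : Pairwise (Disjoint on fun i => ({w i false, w i true} : Set α)) := by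
    simpa only [Bool.range_eq] using pairwise_disjoint_range_of_injective_uncurry hw
  have hcompl : compl '' Bp = H := compl_image_range_compl _
  have hanti : IsAntichain (· ⊆ ·) H :=
    isAntichain_range_of_pairwise_disjoint hdisj fun _ => insert_nonempty _ _
  refine ⟨hcompl, ⟨?_, ?_⟩, setOfPred_minimal_closed_not_subset_compl_pair _ _, ?_, ?_,
    ncard_singleton _⟩
  · rw [← compl_compl_image Bp, hcompl]
    exact hanti.image_compl
  · rintro _ ⟨j, rfl⟩ i
    exact mem_compl_pair_of_pairwise_disjoint hdisj
  · rw [hH, setOfPred_isMinTransversal_range_range hw]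
  · rw [hH, ncard_setOfPred_isMinTransversal_range_range hw, Nat.card_eq_fintype_card (α := Bool),
      Fintype.card_bool]

theorem stmt_15 (n : ℕ) (hn : 1 ≤ n) :
    -- H is the complementary hypergraph of B⁺
    ((fun B => Bᶜ) '' ExBp n = ExH n) ∧
    -- (i) B⁺ is an antichain of closed sets of Σ
    (IsAntichain (· ⊆ ·) (ExBp n) ∧ ∀ B ∈ ExBp n, ExClosed B) ∧
    -- (ii) {v₁, …, vₙ} is the unique inclusion-minimal closed set not contained
    -- in any member of B⁺, i.e. the dual antichain of B⁺ is {{v₁, …, vₙ}}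
    ({C : Set (ExV n) | ExClosed C ∧ (∀ B ∈ ExBp n, ¬ C ⊆ B) ∧
        ∀ C' : Set (ExV n), ExClosed C' → (∀ B ∈ ExBp n, ¬ C' ⊆ B) → C' ⊆ C → C' = C} =
      {ExVs n}) ∧
    -- (iii) Tr(H) is the set of all choice sets, so |Tr(H)| = 2^n while |B⁻| = 1
    ({T : Set (ExV n) | IsMinTransversal (ExH n) T} =
      Set.range fun f : Fin n → Bool => Set.range fun i : Fin n => ((i, f i) : ExV n)) ∧
    {T : Set (ExV n) | IsMinTransversal (ExH n) T}.ncard = 2 ^ n ∧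
    ({ExVs n} : Set (Set (ExV n))).ncard = 1 := by
  simpa only [Nat.card_fin] using! stmt_15_general (w := Prod.mk) (ι := Fin n) injective_id
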